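/- Let α ∈ (0, 2). Then for every γ ∈ [0, π/2], one has Φ_α(2π/3 + γ) + Φ_α(2π/3 − γ) < 0. -/

import Mathlib

/-!
Write `β = α / 2 ∈ (0, 1)`. The substitution `t = r ^ (β + 1)` turns `Φ_α(θ)` into `β + 1` times
`∫₀^∞ [(r + 1/r - 2 cos θ) ^ (-β) - r ^ (-β)] dr`, whose integrand `kern β (cos θ)` is increasing
in `cos θ`, and is negative when `cos θ ≤ 0`. If `γ ≤ π/6`, both cosines are nonpositive and the
claim is immediate. If `γ ≥ π/6`, then `cos (2π/3 + γ) ≤ -√3/2` and `cos (2π/3 - γ) ≤ √3/2`, so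
it remains to show that `kern β (√3/2) + kern β (-√3/2)` has negative integral.

Put `s = r + 1/r ≥ 2` and `x = √3 / s`, so that `x² ≤ 3/4`. Then `(s ∓ √3) ^ (-β)` is
`s ^ (-β) (1 ∓ x) ^ (-β)`, and comparison with a geometric series (`even_part_le`) gives
`(1 - x) ^ (-β) + (1 + x) ^ (-β) ≤ 2 + β (β + 1) (x² + 4 x⁴)`.
The resulting bound is a combination of `s ^ (-β) - r ^ (-β)`, `s ^ (-β - 2)` and
`s ^ (-β - 4)`. For these there is an explicit recurrence: `(1 - n) s ^ (-n) + 4 n s ^ (-n - 2)` is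
the derivative of `primF n`. Modulo derivatives of functions vanishing at `0` and `∞` everything
therefore reduces to a multiple of the single positive function `s ^ (-β - 2)`, and its coefficient
is negative because `1 - 4 β + 15 β² + 12 β³ > 0`. The function `maj` is the derivative in question:
it has integral zero (`maj_integral`) and lies strictly above the integrand (`kern_sum_lt_maj`).
-/

open Real MeasureTheory

/-- The function `Φ_α` from the parabolic-collision variational estimates. -/
noncomputable def Phi (α θ : ℝ) : ℝ :=
  ∫ t in Set.Ioi (0:ℝ),
    ((t ^ (4 / (α + 2)) - 2 * Real.cos θ * t ^ (2 / (α + 2)) + 1) ^ (-(α / 2)) -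
      t ^ (-(2 * α / (α + 2))))

open Filter Topology

/-! ### Reduction to an integral in the radial variable -/

/-- The integrand of `Φ_α(θ) / (β + 1)` in the variable `r`, where `β = α / 2` and `c = cos θ`. -/
noncomputable def kern (β c r : ℝ) : ℝ := (r + r⁻¹ - 2 * c) ^ (-β) - r ^ (-β)

lemma two_le_s {r : ℝ} (hr : 0 < r) : 2 ≤ r + r⁻¹ := by
  have : r + r⁻¹ - 2 = (r - 1) ^ 2 / r := by field_simp; ring
  have h2 : 0 ≤ (r - 1) ^ 2 / r := by positivity
  linarith

lemma quad_pos {c r : ℝ} (hc1 : c < 1) (hr : 0 < r) : 0 < r + r⁻¹ - 2 * c := by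
  linarith [two_le_s hr]

/-- The substitution `t = r ^ (α / 2 + 1)`. -/
lemma Phi_eq {α θ : ℝ} (hα : α ∈ Set.Ioo (0:ℝ) 2) (hc : cos θ < 1) :
    Phi α θ = (α / 2 + 1) * ∫ r in Set.Ioi (0:ℝ), kern (α / 2) (cos θ) r := by
  have h0 := hα.1
  have hq : α / 2 + 1 ≠ 0 := by positivity
  unfold Phi
  rw [← integral_comp_rpow_Ioi _ hq, ← integral_const_mul]
  refine setIntegral_congr_fun measurableSet_Ioi fun x hx => ?_
  have hx : 0 < x := hx
  have e1 : (x ^ (α / 2 + 1)) ^ (4 / (α + 2)) = x ^ 2 := by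
    rw [← rpow_mul hx.le, ← rpow_natCast]; congr 1; field_simp; norm_num
  have e2 : (x ^ (α / 2 + 1)) ^ (2 / (α + 2)) = x := by
    rw [← rpow_mul hx.le]; nth_rw 2 [← rpow_one x]; congr 1; field_simp
  have e3 : (x ^ (α / 2 + 1)) ^ (-(2 * α / (α + 2))) = x ^ (-α) := by
    rw [← rpow_mul hx.le]; congr 1; field_simp
  have e4 : x ^ 2 - 2 * cos θ * x + 1 = x * (x + x⁻¹ - 2 * cos θ) := by field_simp; ring
  have hX := quad_pos hc hx
  simp only [smul_eq_mul, kern]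
  rw [e1, e2, e3, e4, mul_rpow hx.le hX.le, abs_of_pos (by positivity), add_sub_cancel_right,
    mul_assoc, mul_sub, ← mul_assoc, ← rpow_add hx, ← rpow_add hx]
  have e5 : α / 2 + -α = -(α / 2) := by ring
  rw [e5, add_neg_cancel, rpow_zero, one_mul]

/-! ### Integrability of the kernel -/

/-- Control of the kernel near `r = 0`. -/
lemma kern_abs_le_small {β c σ r : ℝ} (hβ : 0 < β) (hσ : 0 < σ) (hr : 0 < r)
    (h : σ * r ≤ r + r⁻¹ - 2 * c) : |kern β c r| ≤ (σ ^ (-β) + 1) * r ^ (-β) := by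
  have h1 : (r + r⁻¹ - 2 * c) ^ (-β) ≤ σ ^ (-β) * r ^ (-β) := by
    rw [← mul_rpow hσ.le hr.le]
    exact rpow_le_rpow_of_nonpos (by positivity) h (by linarith)
  have h2 : 0 ≤ r ^ (-β) := by positivity
  have h3 : 0 ≤ (r + r⁻¹ - 2 * c) ^ (-β) := rpow_nonneg ((by positivity : 0 ≤ σ * r).trans h) _
  rw [kern, abs_le]
  have h4 : 0 ≤ σ ^ (-β) * r ^ (-β) := by positivity
  constructor <;> nlinarith


/-- Bernoulli's inequality for `(y / x) ^ β`, multiplied by `y ^ (-β)`: a first-order bound for the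
difference of two negative powers. -/
lemma rpow_neg_sub_le {β x y : ℝ} (hβ : 0 < β) (hβ1 : β < 1) (hx : 0 < x) (hy : 0 < y) :
    x ^ (-β) - y ^ (-β) ≤ β * (y ^ (-β) * ((y - x) / x)) := by
  have hp : 0 < y / x := by positivity
  have h := rpow_one_add_le_one_add_mul_self (s := y / x - 1) (p := β) (by linarith) hβ.le hβ1.le
  rw [add_sub_cancel, div_rpow hy.le hx.le] at h
  have h2 : 0 < y ^ (-β) := by positivity
  have h3 := mul_le_mul_of_nonneg_left h h2.le
  have h4 : y ^ (-β) * (y ^ β / x ^ β) = x ^ (-β) := by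
    rw [rpow_neg hy.le, rpow_neg hx.le]
    have := rpow_pos_of_pos hy β
    field_simp
  have h5 : (y - x) / x = y / x - 1 := by field_simp
  rw [h5]
  rw [h4] at h3
  linarith

/-- Control of the kernel near `r = ∞`: the two powers, each only of order `r ^ (-β)`, cancel to
leading order. -/
lemma kern_abs_le_large {β c σ r : ℝ} (hβ : 0 < β) (hβ1 : β < 1) (hσ : 0 < σ) (hr : 1 ≤ r)
    (hc : |c| ≤ 1) (h : σ * r ≤ r + r⁻¹ - 2 * c) :
    |kern β c r| ≤ 3 * (σ⁻¹ + σ ^ (-β)) * r ^ (-β - 1) := by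
  have hr0 : 0 < r := by linarith
  set X := r + r⁻¹ - 2 * c with hX
  have hσr : 0 < σ * r := by positivity
  have hX0 : 0 < X := hσr.trans_le h
  have hinv : r⁻¹ ≤ 1 := inv_le_one_of_one_le₀ hr
  have hinv0 : 0 < r⁻¹ := by positivity
  obtain ⟨hc1, hc2⟩ := abs_le.1 hc
  have hp : 0 < r ^ (-β) := by positivity
  have hσp : 0 < σ ^ (-β) := by positivity
  have e : r ^ (-β - 1) = r ^ (-β) * r⁻¹ := by rw [rpow_sub hr0, rpow_one]; rfl
  have h1 : X ^ (-β) ≤ σ ^ (-β) * r ^ (-β) := by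
    rw [← mul_rpow hσ.le hr0.le]
    exact rpow_le_rpow_of_nonpos (by positivity) h (by linarith)
  have u1 := rpow_neg_sub_le hβ hβ1 hX0 hr0
  have u2 := rpow_neg_sub_le hβ hβ1 hr0 hX0
  have hXp : 0 < X ^ (-β) := by positivity
  have v1 : β * (r ^ (-β) * ((r - X) / X)) ≤ 3 * σ⁻¹ * (r ^ (-β) * r⁻¹) := by
    have : (r - X) / X ≤ 3 * σ⁻¹ * r⁻¹ := by
      rw [mul_assoc, ← mul_inv, div_eq_mul_inv]
      have i1 : X⁻¹ ≤ (σ * r)⁻¹ := inv_anti₀ hσr h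
      have i2 : 0 < X⁻¹ := by positivity
      calc (r - X) * X⁻¹ ≤ 3 * X⁻¹ := by gcongr; linarith
        _ ≤ _ := by gcongr
    calc _ ≤ β * (r ^ (-β) * (3 * σ⁻¹ * r⁻¹)) := by gcongr
      _ ≤ 1 * (r ^ (-β) * (3 * σ⁻¹ * r⁻¹)) := by gcongr
      _ = _ := by ring
  have v2 : β * (X ^ (-β) * ((X - r) / r)) ≤ 3 * σ ^ (-β) * (r ^ (-β) * r⁻¹) := by
    have : (X - r) / r ≤ 3 * r⁻¹ := by
      rw [div_eq_mul_inv]; gcongr; linarith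
    calc _ ≤ β * (X ^ (-β) * (3 * r⁻¹)) := by gcongr
      _ ≤ 1 * (σ ^ (-β) * r ^ (-β) * (3 * r⁻¹)) := by gcongr
      _ = _ := by ring
  have w1 : 0 ≤ 3 * σ⁻¹ * (r ^ (-β) * r⁻¹) := by positivity
  have w2 : 0 ≤ 3 * σ ^ (-β) * (r ^ (-β) * r⁻¹) := by positivity
  rw [kern, ← hX, e, abs_le]
  constructor <;> linarith

/-- Supplies the constant `σ` required by `kern_abs_le_small` and `kern_abs_le_large`. -/
lemma exists_lower {c : ℝ} (hc1 : c < 1) :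
    ∃ σ : ℝ, 0 < σ ∧ ∀ r : ℝ, 0 < r → σ * r ≤ r + r⁻¹ - 2 * c := by
  rcases le_or_gt c 0 with h | h
  · refine ⟨1, one_pos, fun r hr => ?_⟩
    have : 0 < r⁻¹ := by positivity
    linarith
  · refine ⟨1 - c ^ 2, by nlinarith, fun r hr => ?_⟩
    have : r + r⁻¹ - 2 * c - (1 - c ^ 2) * r = (c * r - 1) ^ 2 / r := by field_simp; ring
    have h2 : 0 ≤ (c * r - 1) ^ 2 / r := by positivity
    linarith

lemma integrableOn_of_bounds {f : ℝ → ℝ} {β C D : ℝ} (hβ : 0 < β) (hβ1 : β < 1)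
    (hf : Measurable f) (h0 : ∀ r, 0 < r → r ≤ 1 → |f r| ≤ C * r ^ (-β))
    (h1 : ∀ r, 1 ≤ r → |f r| ≤ D * r ^ (-β - 1)) : IntegrableOn f (Set.Ioi 0) := by
  rw [← Set.Ioc_union_Ioi_eq_Ioi (zero_le_one' ℝ)]
  refine IntegrableOn.union ?_ ?_
  · have := (intervalIntegral.intervalIntegrable_rpow' (a := 0) (b := 1) (r := -β)
      (by linarith)).1.const_mul C
    refine Integrable.mono' this hf.aestronglyMeasurable ?_
    exact (ae_restrict_iff' measurableSet_Ioc).2 (.of_forall fun r hr => h0 r hr.1 hr.2)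
  · have := (integrableOn_Ioi_rpow_of_lt (a := -β - 1) (by linarith) one_pos).const_mul D
    refine Integrable.mono' this hf.aestronglyMeasurable ?_
    exact (ae_restrict_iff' measurableSet_Ioi).2 (.of_forall fun r hr => h1 r (le_of_lt hr))

lemma kern_integrable {β c : ℝ} (hβ : 0 < β) (hβ1 : β < 1) (hc : -1 ≤ c) (hc1 : c < 1) :
    IntegrableOn (kern β c) (Set.Ioi 0) := by
  obtain ⟨σ, hσ, h⟩ := exists_lower hc1
  refine integrableOn_of_bounds hβ hβ1 (by unfold kern; fun_prop)
    (fun r hr _ => kern_abs_le_small hβ hσ hr (h r hr))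
    (fun r hr => kern_abs_le_large hβ hβ1 hσ hr (abs_le.2 ⟨hc, hc1.le⟩) (h r (by linarith)))

/-! ### An antiderivative of integral zero -/

lemma s_rpow_le_inv {r m : ℝ} (hr : 0 < r) (hm : 1 ≤ m) :
    (r + r⁻¹) ^ (-m) ≤ (r + r⁻¹)⁻¹ := by
  rw [← rpow_neg_one (r + r⁻¹)]
  exact rpow_le_rpow_of_exponent_le (by linarith [two_le_s hr]) (by linarith)

lemma s_inv_le {r : ℝ} (hr : 0 < r) : (r + r⁻¹)⁻¹ ≤ r ∧ (r + r⁻¹)⁻¹ ≤ r⁻¹ := by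
  have h : 0 < r⁻¹ := by positivity
  constructor
  · calc (r + r⁻¹)⁻¹ ≤ (r⁻¹)⁻¹ := inv_anti₀ h (by linarith)
      _ = r := inv_inv r
  · exact inv_anti₀ hr (by linarith)

lemma s_rpow_integrable {m : ℝ} (hm : 2 ≤ m) :
    IntegrableOn (fun r : ℝ => (r + r⁻¹) ^ (-m)) (Set.Ioi 0) := by
  refine integrableOn_of_bounds (β := 1 / 2) (C := 1) (D := 1) (by norm_num) (by norm_num)
    (by fun_prop) (fun r hr hr1 => ?_) (fun r hr => ?_)
  · have h2 := two_le_s hr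
    rw [abs_of_nonneg (by positivity), one_mul]
    calc (r + r⁻¹) ^ (-m) ≤ 1 := rpow_le_one_of_one_le_of_nonpos (by linarith) (by linarith)
      _ ≤ _ := one_le_rpow_of_pos_of_le_one_of_nonpos hr hr1 (by norm_num)
  · have hr0 : 0 < r := by linarith
    have hi : 0 < r⁻¹ := by positivity
    rw [abs_of_nonneg (by positivity), one_mul]
    calc (r + r⁻¹) ^ (-m) ≤ r ^ (-m) := rpow_le_rpow_of_nonpos hr0 (by linarith) (by linarith)
      _ ≤ _ := rpow_le_rpow_of_exponent_le hr (by linarith)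

/-- With `s = r + 1/r`, the function `r s ^ (-n) - (2 n / (n + 1)) s ^ (-(n + 1))`, whose derivative
relates the consecutive powers `s ^ (-n)` and `s ^ (-(n + 2))`. At `r = 0` the convention `0⁻¹ = 0`
gives the value `0` for `n > 0`, which is also the limit from the right. -/
noncomputable def primF (n r : ℝ) : ℝ :=
  r * (r + r⁻¹) ^ (-n) - 2 * n / (n + 1) * (r + r⁻¹) ^ (-(n + 1))

lemma primF_deriv {n r : ℝ} (hn : 0 < n) (hr : 0 < r) :
    HasDerivAt (primF n)
      ((1 - n) * (r + r⁻¹) ^ (-n) + 4 * n * (r + r⁻¹) ^ (-(n + 2))) r := by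
  have hs : 0 < r + r⁻¹ := by positivity
  have d : HasDerivAt (fun r : ℝ => r + r⁻¹) (1 + -(r ^ 2)⁻¹) r :=
    (hasDerivAt_id r).add (hasDerivAt_inv hr.ne')
  have d1 := d.rpow_const (p := -n) (Or.inl hs.ne')
  have d2 := d.rpow_const (p := -(n + 1)) (Or.inl hs.ne')
  have d3 := ((hasDerivAt_id r).mul d1).sub (d2.const_mul (2 * n / (n + 1)))
  refine d3.congr_deriv ?_
  have e1 : (r + r⁻¹) ^ (-n - 1) = (r + r⁻¹) ^ (-(n + 2)) * (r + r⁻¹) := by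
    rw [← rpow_add_one hs.ne']; congr 1; ring
  have e0 : (r + r⁻¹) ^ (-n) = (r + r⁻¹) ^ (-(n + 2)) * (r + r⁻¹) * (r + r⁻¹) := by
    rw [← rpow_add_one hs.ne', ← rpow_add_one hs.ne']; congr 1; ring
  have e2 : -(n + 1) - 1 = -(n + 2) := by ring
  simp only [id]
  rw [e2, e1, e0]
  generalize (r + r⁻¹) ^ (-(n + 2)) = y
  field_simp
  ring

lemma primF_abs_le {n r : ℝ} (hn : 0 < n) (hr : 0 < r) : |primF n r| ≤ 3 * r := by
  have h2 := two_le_s hr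
  have a1 : (r + r⁻¹) ^ (-n) ≤ 1 := rpow_le_one_of_one_le_of_nonpos (by linarith) (by linarith)
  have a2 := (s_rpow_le_inv (m := n + 1) hr (by linarith)).trans (s_inv_le hr).1
  have a3 : 0 ≤ (r + r⁻¹) ^ (-n) := by positivity
  have a4 : 0 ≤ (r + r⁻¹) ^ (-(n + 1)) := by positivity
  have a5 : 2 * n / (n + 1) ≤ 2 := by rw [div_le_iff₀ (by linarith)]; linarith
  have a6 : 0 ≤ 2 * n / (n + 1) := by positivity
  rw [primF, abs_le]
  have b1 : r * (r + r⁻¹) ^ (-n) ≤ r * 1 := by gcongr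
  have b2 : 2 * n / (n + 1) * (r + r⁻¹) ^ (-(n + 1)) ≤ 2 * r := by gcongr
  have b3 : 0 ≤ r * (r + r⁻¹) ^ (-n) := by positivity
  have b4 : 0 ≤ 2 * n / (n + 1) * (r + r⁻¹) ^ (-(n + 1)) := by positivity
  constructor <;> linarith

lemma primF_abs_le_inv {n r : ℝ} (hn : 2 ≤ n) (hr : 0 < r) : |primF n r| ≤ 3 * r⁻¹ := by
  have h2 := two_le_s hr
  have hs : 0 < r + r⁻¹ := by positivity
  have a1 : (r + r⁻¹) ^ (-n) ≤ r⁻¹ * r⁻¹ := by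
    have : (r + r⁻¹) ^ (-n) ≤ (r + r⁻¹) ^ (-2 : ℝ) :=
      rpow_le_rpow_of_exponent_le (by linarith) (by linarith)
    have e : (r + r⁻¹) ^ (-2 : ℝ) = (r + r⁻¹)⁻¹ * (r + r⁻¹)⁻¹ := by
      rw [← rpow_neg_one (r + r⁻¹), ← rpow_add hs]; norm_num
    rw [e] at this
    have i := (s_inv_le hr).2
    refine this.trans ?_
    gcongr
  have a2 := (s_rpow_le_inv (m := n + 1) hr (by linarith)).trans (s_inv_le hr).2
  have a5 : 2 * n / (n + 1) ≤ 2 := by rw [div_le_iff₀ (by linarith)]; linarith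
  have a6 : 0 ≤ 2 * n / (n + 1) := by positivity
  rw [primF, abs_le]
  have b1 : r * (r + r⁻¹) ^ (-n) ≤ r * (r⁻¹ * r⁻¹) := by gcongr
  have b0 : r * (r⁻¹ * r⁻¹) = r⁻¹ := by field_simp
  have b2 : 2 * n / (n + 1) * (r + r⁻¹) ^ (-(n + 1)) ≤ 2 * r⁻¹ := by gcongr
  have b3 : 0 ≤ r * (r + r⁻¹) ^ (-n) := by positivity
  have b4 : 0 ≤ 2 * n / (n + 1) * (r + r⁻¹) ^ (-(n + 1)) := by positivity
  constructor <;> linarith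

lemma primF_zero {n : ℝ} (hn : 0 < n) : primF n 0 = 0 := by
  have h : -(n + 1) ≠ 0 := by linarith
  rw [primF, inv_zero, add_zero, zero_rpow h]
  simp

lemma primF_cont {n : ℝ} (hn : 0 < n) : ContinuousWithinAt (primF n) (Set.Ici 0) 0 := by
  rw [ContinuousWithinAt, primF_zero hn]
  have h : Tendsto (fun r : ℝ => 3 * r) (𝓝[≥] 0) (𝓝 0) := by
    have : Tendsto (fun r : ℝ => 3 * r) (𝓝 0) (𝓝 (3 * 0)) := (continuous_const_mul 3).tendsto 0
    rw [mul_zero] at this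
    exact this.mono_left nhdsWithin_le_nhds
  refine squeeze_zero_norm' ?_ h
  filter_upwards [self_mem_nhdsWithin] with r hr
  rcases (Set.mem_Ici.1 hr).eq_or_lt with rfl | hr
  · simp [primF_zero hn]
  · exact primF_abs_le hn hr

lemma primF_tendsto {n : ℝ} (hn : 2 ≤ n) : Tendsto (primF n) atTop (𝓝 0) := by
  have h : Tendsto (fun r : ℝ => 3 * r⁻¹) atTop (𝓝 0) := by
    simpa using tendsto_inv_atTop_zero.const_mul (3 : ℝ)
  refine squeeze_zero_norm' ?_ h
  filter_upwards [eventually_gt_atTop 0] with r hr using primF_abs_le_inv hn hr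

/-- For `0 < β < 1` the term `r s ^ (-β)` of `primF β r` is unbounded; subtracting the antiderivative
of `(1 - β) r ^ (-β)` restores decay. -/
lemma primF_sub_tendsto {β : ℝ} (hβ : 0 < β) (hβ1 : β < 1) :
    Tendsto (fun r => primF β r - r ^ (1 - β)) atTop (𝓝 0) := by
  have h : Tendsto (fun r : ℝ => 6 * r ^ (-β) + 2 * r⁻¹) atTop (𝓝 0) := by
    simpa using ((tendsto_rpow_neg_atTop hβ).const_mul (6 : ℝ)).add
      (tendsto_inv_atTop_zero.const_mul (2 : ℝ))
  refine squeeze_zero_norm' ?_ h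
  filter_upwards [eventually_ge_atTop 1] with r hr
  have hr0 : 0 < r := by linarith
  have hi : 0 < r⁻¹ := by positivity
  have k := kern_abs_le_large (c := 0) hβ hβ1 one_pos hr (by simp) (by linarith)
  have e : primF β r - r ^ (1 - β)
      = r * kern β 0 r - 2 * β / (β + 1) * (r + r⁻¹) ^ (-(β + 1)) := by
    rw [primF, kern, sub_eq_add_neg 1 β, rpow_add hr0, rpow_one]; ring_nf
  have e2 : r ^ (-β) = r * r ^ (-β - 1) := by rw [rpow_sub hr0, rpow_one]; field_simp
  have a2 := (s_rpow_le_inv (m := β + 1) hr0 (by linarith)).trans (s_inv_le hr0).2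
  have a5 : 2 * β / (β + 1) ≤ 2 := by rw [div_le_iff₀ (by linarith)]; linarith
  have b2 : 2 * β / (β + 1) * (r + r⁻¹) ^ (-(β + 1)) ≤ 2 * r⁻¹ := by gcongr
  have b4 : 0 ≤ 2 * β / (β + 1) * (r + r⁻¹) ^ (-(β + 1)) := by positivity
  have b5 : |r * kern β 0 r| ≤ 6 * r ^ (-β) := by
    rw [abs_mul, abs_of_pos hr0, e2]
    rw [inv_one, one_rpow] at k
    calc _ ≤ r * (3 * (1 + 1) * r ^ (-β - 1)) := by gcongr
      _ = _ := by ring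
  obtain ⟨b6, b7⟩ := abs_le.1 b5
  rw [norm_eq_abs, e, abs_le]
  constructor <;> linarith

/-- The derivative of `2 / (1 - β) (primF β r - r ^ (1 - β)) + λ primF (β + 2) r` with
`λ = 9 β (β + 1) / (β + 2)`. The first coefficient matches the term `2 (s ^ (-β) - r ^ (-β))` and
`λ` matches the term `36 β (β + 1) s ^ (-(β + 4))` in the upper bound for the summed kernels. -/
noncomputable def maj (β r : ℝ) : ℝ :=
  2 / (1 - β) * ((1 - β) * (r + r⁻¹) ^ (-β) + 4 * β * (r + r⁻¹) ^ (-(β + 2))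
      - (1 - β) * r ^ (-β))
    + 9 * β * (β + 1) / (β + 2) * ((1 - (β + 2)) * (r + r⁻¹) ^ (-(β + 2))
      + 4 * (β + 2) * (r + r⁻¹) ^ (-(β + 2 + 2)))

lemma maj_integrable {β : ℝ} (hβ : 0 < β) (hβ1 : β < 1) :
    IntegrableOn (maj β) (Set.Ioi 0) := by
  have i0 := kern_integrable hβ hβ1 (c := 0) (by norm_num) (by norm_num)
  have i1 := s_rpow_integrable (m := β + 2) (by linarith)
  have i2 := s_rpow_integrable (m := β + 2 + 2) (by linarith)
  have := (((i0.const_mul (1 - β)).add (i1.const_mul (4 * β))).const_mul (2 / (1 - β))).add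
    (((i1.const_mul (1 - (β + 2))).add (i2.const_mul (4 * (β + 2)))).const_mul
      (9 * β * (β + 1) / (β + 2)))
  refine this.congr (.of_forall fun r => ?_)
  simp only [Pi.add_apply, maj, kern, mul_zero, sub_zero]
  ring

lemma maj_integral {β : ℝ} (hβ : 0 < β) (hβ1 : β < 1) :
    ∫ r in Set.Ioi (0:ℝ), maj β r = 0 := by
  have h1 : 0 < 1 - β := by linarith
  have := integral_Ioi_of_hasDerivAt_of_tendsto (a := 0) (m := 0)
    (f := fun r => 2 / (1 - β) * (primF β r - r ^ (1 - β))
      + 9 * β * (β + 1) / (β + 2) * primF (β + 2) r) (f' := maj β) ?_ ?_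
      (maj_integrable hβ hβ1) ?_
  · rw [this, primF_zero hβ, primF_zero (by linarith), zero_rpow h1.ne']; simp
  · exact (((primF_cont hβ).sub
      (continuousAt_rpow_const 0 (1 - β) (Or.inr h1.le)).continuousWithinAt).const_mul _).add
      ((primF_cont (by linarith)).const_mul _)
  · intro r hr
    have hr : 0 < r := hr
    have d := hasDerivAt_rpow_const (x := r) (p := 1 - β) (Or.inl hr.ne')
    rw [show 1 - β - 1 = -β by ring] at d
    exact (((primF_deriv hβ hr).sub d).const_mul _).add
      ((primF_deriv (by linarith) hr).const_mul _)
  · simpa using ((primF_sub_tendsto hβ hβ1).const_mul (2 / (1 - β))).add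
      ((primF_tendsto (n := β + 2) (by linarith)).const_mul (9 * β * (β + 1) / (β + 2)))

/-! ### Pointwise comparison -/

/-- Both sides vanish at `x = 0`, and by Bernoulli the derivative of the left side is at most that of
the right side. -/
lemma odd_part_le {β x : ℝ} (hβ : 0 < β) (hβ1 : β < 1) (hx : 0 ≤ x) (hx1 : x < 1) :
    (1 + x) ^ (β + 1) - (1 - x) ^ (β + 1) ≤ 2 * (β + 1) * x := by
  have hd : ∀ y ∈ Set.Ico (0:ℝ) 1, HasDerivAt
      (fun y : ℝ => 2 * (β + 1) * y - ((1 + y) ^ (β + 1) - (1 - y) ^ (β + 1)))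
      (2 * (β + 1) - (1 * (β + 1) * (1 + y) ^ (β + 1 - 1)
        - -1 * (β + 1) * (1 - y) ^ (β + 1 - 1))) y := by
    intro y hy
    have d1 := ((hasDerivAt_id y).const_add 1).rpow_const (p := β + 1) (Or.inl (by
      simp only [id]; linarith [hy.1] : (1 + id y) ≠ 0))
    have d2 := ((hasDerivAt_id y).const_sub 1).rpow_const (p := β + 1) (Or.inl (by
      simp only [id]; linarith [hy.2] : (1 - id y) ≠ 0))
    have d3 := (hasDerivAt_id y).const_mul (2 * (β + 1))
    exact (d3.sub (d1.sub d2)).congr_deriv (by simp only [id]; ring)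
  have hm := monotoneOn_of_deriv_nonneg (convex_Ico (0:ℝ) 1)
    (fun y hy => (hd y hy).continuousAt.continuousWithinAt)
    (fun y hy => (hd y (interior_subset hy)).differentiableAt.differentiableWithinAt)
    (fun y hy => by
      have hy := interior_subset hy
      rw [(hd y hy).deriv, add_sub_cancel_right]
      have b1 := rpow_one_add_le_one_add_mul_self (s := y) (p := β) (by linarith [hy.1])
        hβ.le hβ1.le
      have b2 := rpow_one_add_le_one_add_mul_self (s := -y) (p := β) (by linarith [hy.2])
        hβ.le hβ1.le
      rw [← sub_eq_add_neg] at b2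
      nlinarith)
    (Set.left_mem_Ico.2 one_pos) (⟨hx, hx1⟩ : x ∈ Set.Ico (0:ℝ) 1) hx
  simp at hm
  linarith

/-- Every coefficient of `x ^ (2k)`, `k ≥ 1`, in the binomial series of the left side is at most the
one for `k = 1`, namely `β (β + 1)`; the right side is the corresponding geometric series. The proof
compares derivatives, which reduces the claim to `odd_part_le`. -/
lemma even_part_le {β x : ℝ} (hβ : 0 < β) (hβ1 : β < 1) (hx : 0 ≤ x) (hx1 : x < 1) :
    (1 - x) ^ (-β) + (1 + x) ^ (-β) ≤ 2 + β * (β + 1) * ((1 - x ^ 2)⁻¹ - 1) := by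
  have hd : ∀ y ∈ Set.Ico (0:ℝ) 1, HasDerivAt
      (fun y : ℝ => β * (β + 1) * (1 - y ^ 2)⁻¹ - ((1 - y) ^ (-β) + (1 + y) ^ (-β)))
      (β * (β + 1) * (2 * y / (1 - y ^ 2) ^ 2)
        - β * ((1 - y) ^ (-β - 1) - (1 + y) ^ (-β - 1))) y := by
    intro y hy
    have d1 := ((hasDerivAt_id y).const_add 1).rpow_const (p := -β) (Or.inl (by
      simp only [id]; linarith [hy.1] : (1 + id y) ≠ 0))
    have d2 := ((hasDerivAt_id y).const_sub 1).rpow_const (p := -β) (Or.inl (by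
      simp only [id]; linarith [hy.2] : (1 - id y) ≠ 0))
    have d3 := ((((hasDerivAt_id y).pow 2).const_sub 1).inv (by
      simp only [Pi.pow_apply, id]; nlinarith [hy.1, hy.2])).const_mul (β * (β + 1))
    exact (d3.sub (d2.add d1)).congr_deriv (by simp only [id, Pi.pow_apply]; ring_nf)
  have hm := monotoneOn_of_deriv_nonneg (convex_Ico (0:ℝ) 1)
    (fun y hy => (hd y hy).continuousAt.continuousWithinAt)
    (fun y hy => (hd y (interior_subset hy)).differentiableAt.differentiableWithinAt)
    (fun y hy => by
      have hy := interior_subset hy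
      rw [(hd y hy).deriv]
      have o := odd_part_le hβ hβ1 hy.1 hy.2
      have p1 : 0 < 1 + y := by linarith [hy.1]
      have p2 : 0 < 1 - y := by linarith [hy.2]
      have e : 1 - y ^ 2 = (1 - y) * (1 + y) := by ring
      have q1 : 0 < (1 + y) ^ (β + 1) := by positivity
      have q2 : 0 < (1 - y) ^ (β + 1) := by positivity
      have h1 : (1 - y) ^ (-β - 1) - (1 + y) ^ (-β - 1)
          = ((1 + y) ^ (β + 1) - (1 - y) ^ (β + 1)) / (1 - y ^ 2) ^ (β + 1) := by
        rw [e, mul_rpow p2.le p1.le, show -β - 1 = -(β + 1) by ring, rpow_neg p1.le,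
          rpow_neg p2.le]
        field_simp
      have p3 : 0 < 1 - y ^ 2 := by rw [e]; positivity
      have h2 : (1 - y ^ 2) ^ (2:ℕ) ≤ (1 - y ^ 2) ^ (β + 1) := by
        rw [← rpow_natCast]
        exact rpow_le_rpow_of_exponent_ge p3 (by nlinarith [hy.1]) (by push_cast; linarith)
      have h3 : (1 - y) ^ (-β - 1) - (1 + y) ^ (-β - 1)
          ≤ 2 * (β + 1) * y / (1 - y ^ 2) ^ 2 := by
        rw [h1]
        have := hy.1
        gcongr
      have h4 : β * (β + 1) * (2 * y / (1 - y ^ 2) ^ 2)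
          = β * (2 * (β + 1) * y / (1 - y ^ 2) ^ 2) := by ring
      rw [h4, ← mul_sub]
      exact mul_nonneg hβ.le (by linarith))
    (Set.left_mem_Ico.2 one_pos) (⟨hx, hx1⟩ : x ∈ Set.Ico (0:ℝ) 1) hx
  simp at hm
  linarith

lemma kern_mono {β c d r : ℝ} (hβ : 0 < β) (hr : 0 < r) (hcd : c ≤ d) (hd : d < 1) :
    kern β c r ≤ kern β d r := by
  unfold kern
  gcongr ?_ - _
  exact rpow_le_rpow_of_nonpos (quad_pos hd hr) (by linarith) (by linarith)

lemma sqrt_three_half : √3 / 2 < 1 := by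
  have : √3 < 2 := by rw [sqrt_lt' (by norm_num)]; norm_num
  linarith

/-- The extreme case `cos θ = ±√3/2`. After the two kernels are bounded by powers of `s`, the bound
differs from `maj` only in the coefficient of `s ^ (-(β + 2))`. -/
lemma kern_sum_lt_maj {β r : ℝ} (hβ : 0 < β) (hβ1 : β < 1) (hr : 0 < r) :
    kern β (√3 / 2) r + kern β (-(√3 / 2)) r < maj β r := by
  have h2 := two_le_s hr
  unfold kern maj
  set s := r + r⁻¹ with hs
  have s0 : 0 < s := by linarith
  have h3 : √3 ^ 2 = 3 := sq_sqrt (by norm_num)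
  have h30 : 0 < √3 := by positivity
  have hlt := sqrt_three_half
  set x := √3 / s with hx
  have x0 : 0 < x := by positivity
  have x1 : x < 1 := by rw [hx, div_lt_one s0]; linarith
  have hx2 : x ^ 2 = 3 / s ^ 2 := by rw [hx, div_pow, h3]
  have hx34 : x ^ 2 ≤ 3 / 4 := by
    rw [hx2, div_le_div_iff₀ (by positivity) (by norm_num)]; nlinarith
  have E := even_part_le hβ hβ1 x0.le x1
  have m1 : (s - 2 * (√3 / 2)) ^ (-β) = s ^ (-β) * (1 - x) ^ (-β) := by
    rw [← mul_rpow s0.le (by linarith)]; congr 1; rw [hx]; field_simp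
  have m2 : (s - 2 * -(√3 / 2)) ^ (-β) = s ^ (-β) * (1 + x) ^ (-β) := by
    rw [← mul_rpow s0.le (by linarith)]; congr 1; rw [hx]; field_simp; ring
  have hg : (1 - x ^ 2)⁻¹ - 1 ≤ x ^ 2 + 4 * (x ^ 2) ^ 2 := by
    have : 0 < 1 - x ^ 2 := by linarith
    rw [sub_le_iff_le_add, inv_le_iff_one_le_mul₀ this]
    nlinarith [sq_nonneg (x ^ 2)]
  have y2 : s ^ (-(β + 2)) = s ^ (-β) / s ^ 2 := by
    rw [neg_add, ← sub_eq_add_neg, rpow_sub s0]; norm_num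
  have y4 : s ^ (-(β + 2 + 2)) = s ^ (-β) / s ^ 2 / s ^ 2 := by
    rw [neg_add, neg_add, ← sub_eq_add_neg, ← sub_eq_add_neg, rpow_sub s0, rpow_sub s0]; norm_num
  rw [m1, m2, y2, y4]
  have Y0 : 0 < s ^ (-β) := by positivity
  set Y := s ^ (-β)
  set Z := Y / s ^ 2 with hZ
  have Z0 : 0 < Z := by positivity
  have b0 : 0 < β * (β + 1) := by positivity
  have up : Y * (1 - x) ^ (-β) + Y * (1 + x) ^ (-β)
      ≤ 2 * Y + β * (β + 1) * (3 * Z + 36 * (Z / s ^ 2)) := by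
    rw [← mul_add]
    calc _ ≤ Y * (2 + β * (β + 1) * (x ^ 2 + 4 * (x ^ 2) ^ 2)) := by
          refine mul_le_mul_of_nonneg_left (E.trans ?_) Y0.le
          gcongr
      _ = _ := by rw [hx2, hZ]; field_simp; ring
  -- The coefficient of `s ^ (-(β + 2))` in the bound is smaller than the one in `maj`.
  have key : 3 * (β * (β + 1)) < 8 * β / (1 - β) - 9 * β * (β + 1) ^ 2 / (β + 2) := by
    have : 0 < 1 - β := by linarith
    rw [div_sub_div _ _ this.ne' (by positivity), lt_div_iff₀ (by positivity)]
    have hb : 0 < 1 - 4 * β + 15 * β ^ 2 + 12 * β ^ 3 := by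
      have : 0 < β ^ 3 := by positivity
      nlinarith [sq_nonneg (β - 2 / 15)]
    have := mul_pos hβ hb
    nlinarith
  have key2 := mul_lt_mul_of_pos_right key Z0
  have id1 : 2 / (1 - β) * ((1 - β) * Y + 4 * β * Z - (1 - β) * r ^ (-β))
      + 9 * β * (β + 1) / (β + 2) * ((1 - (β + 2)) * Z + 4 * (β + 2) * (Z / s ^ 2))
      = 2 * Y - 2 * r ^ (-β)
        + (8 * β / (1 - β) - 9 * β * (β + 1) ^ 2 / (β + 2)) * Z
        + 36 * (β * (β + 1)) * (Z / s ^ 2) := by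
    have : 1 - β ≠ 0 := by linarith
    generalize Z / s ^ 2 = W
    field_simp
    ring
  rw [id1]
  nlinarith

/-! ### Conclusion -/

lemma integral_lt_of_lt {f g : ℝ → ℝ} (hf : IntegrableOn f (Set.Ioi 0))
    (hg : IntegrableOn g (Set.Ioi 0)) (h : ∀ r, 0 < r → f r < g r) :
    ∫ r in Set.Ioi (0:ℝ), f r < ∫ r in Set.Ioi (0:ℝ), g r := by
  have := (setIntegral_pos_iff_support_of_nonneg_ae
    ((ae_restrict_iff' measurableSet_Ioi).2 (.of_forall fun r hr => (sub_pos.2 (h r hr)).le))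
    (hg.sub hf)).2 (by
      have : Function.support (fun r => g r - f r) ∩ Set.Ioi 0 = Set.Ioi 0 :=
        Set.inter_eq_right.2 fun r hr => (sub_pos.2 (h r hr)).ne'
      rw [this]; simp)
  rw [integral_sub hg hf] at this
  linarith

lemma integral_sum_neg {β c d : ℝ} (hβ : 0 < β) (hβ1 : β < 1) (hc : -1 ≤ c) (hd : -1 ≤ d)
    (h : (c ≤ 0 ∧ d ≤ 0) ∨ (c ≤ -(√3 / 2) ∧ d ≤ √3 / 2)) :
    (∫ r in Set.Ioi (0:ℝ), kern β c r) + (∫ r in Set.Ioi (0:ℝ), kern β d r) < 0 := by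
  have h32 := sqrt_three_half
  have h3 : 0 < √3 / 2 := by positivity
  have hc1 : c < 1 := by rcases h with h | h <;> linarith [h.1]
  have hd1 : d < 1 := by rcases h with h | h <;> linarith [h.2]
  have ic := kern_integrable hβ hβ1 hc hc1
  have id := kern_integrable hβ hβ1 hd hd1
  rw [← integral_add ic id]
  rcases h with ⟨h1, h2⟩ | ⟨h1, h2⟩
  · have := integral_lt_of_lt (g := fun _ => 0) (ic.add id) (integrableOn_zero) ?_
    · simpa using this
    · have aux : ∀ e ≤ (0:ℝ), ∀ r : ℝ, 0 < r → kern β e r < 0 := by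
        intro e he r hr
        have : 0 < r⁻¹ := by positivity
        exact sub_neg.2 (rpow_lt_rpow_of_neg hr (by linarith) (by linarith))
      intro r hr
      exact add_neg (aux c h1 r hr) (aux d h2 r hr)
  · refine lt_of_lt_of_eq ?_ (maj_integral hβ hβ1)
    refine integral_lt_of_lt (ic.add id) (maj_integrable hβ hβ1) fun r hr => ?_
    have k1 := kern_mono hβ hr h1 (by linarith)
    have k2 := kern_mono hβ hr h2 h32
    have k3 := kern_sum_lt_maj hβ hβ1 hr
    linarith

theorem lagrange_triple_collision_variation (α : ℝ) (hα : α ∈ Set.Ioo (0:ℝ) 2) :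
    ∀ γ ∈ Set.Icc (0:ℝ) (π / 2),
      Phi α (2 * π / 3 + γ) + Phi α (2 * π / 3 - γ) < 0 := by
  rintro γ ⟨g0, g1⟩
  have hpi := pi_pos
  have h32 := sqrt_three_half
  have h3 : 0 < √3 / 2 := by positivity
  have h := hα.1
  have h' := hα.2
  have cases : (cos (2 * π / 3 + γ) ≤ 0 ∧ cos (2 * π / 3 - γ) ≤ 0) ∨
      (cos (2 * π / 3 + γ) ≤ -(√3 / 2) ∧ cos (2 * π / 3 - γ) ≤ √3 / 2) := by
    rcases le_or_gt γ (π / 6) with hg | hg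
    · left
      constructor <;> exact cos_nonpos_of_pi_div_two_le_of_le (by linarith) (by linarith)
    · right
      constructor
      · have e : cos (2 * π / 3 + γ) = -cos |γ - π / 3| := by
          rw [cos_abs, ← cos_add_pi]; congr 1; ring
        rw [e, neg_le_neg_iff, ← cos_pi_div_six]
        refine cos_le_cos_of_nonneg_of_le_pi (abs_nonneg _) (by linarith) ?_
        rw [abs_le]; constructor <;> linarith
      · rw [← cos_pi_div_six]
        exact cos_le_cos_of_nonneg_of_le_pi (by linarith) (by linarith) (by linarith)
  have c1 : cos (2 * π / 3 + γ) < 1 := by rcases cases with h | h <;> linarith [h.1]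
  have c2 : cos (2 * π / 3 - γ) < 1 := by rcases cases with h | h <;> linarith [h.2]
  rw [Phi_eq hα c1, Phi_eq hα c2, ← mul_add]
  exact mul_neg_of_pos_of_neg (by linarith) (integral_sum_neg (by linarith) (by linarith)
    (neg_one_le_cos _) (neg_one_le_cos _) cases)
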